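/- Let T be a rooted tree on the vertex set of a flow graph G that has the parent property, together with a low-high order on G. Let b, r : V \ {s} → V be functions such that for every v ≠ s: (b(v), v) ∈ A with b(v) < v in the low-high order, and (r(v), v) ∈ A with either r(v) = t(v), or r(v) > v in the low-high order and r(v) not a descendant of v in T. Let B and R be the directed graphs on V with arc sets {(b(v), v) : v ≠ s} and {(r(v), v) : v ≠ s}, respectively. Then B and R are strongly independent spanning trees of G rooted at s. -/

import Mathlib

variable {V : Type*}

/-- `IsWalk A u v p`: `p` is a path from `u` to `v` in the digraph with arc
relation `A`, listing all of its vertices in order. -/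
def IsWalk (A : V → V → Prop) (u v : V) (p : List V) : Prop :=
  p.Chain' A ∧ p.head? = some u ∧ p.getLast? = some v

/-- A flow graph: a directed graph with arc relation `A` and start vertex `s`
such that every vertex is reachable from `s` and no arc enters `s`. -/
structure FlowGraph (V : Type*) where
  A : V → V → Prop
  s : V
  reach : ∀ v : V, ∃ p : List V, IsWalk A s v p
  no_enter : ∀ v : V, ¬ A v s

/-- `DomOn A s v w`: `v` lies on every path from `s` to `w` in the digraph with
arc relation `A`. -/
def DomOn (A : V → V → Prop) (s v w : V) : Prop :=
  ∀ p : List V, IsWalk A s w p → v ∈ p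

/-- `v` dominates `w` in the flow graph `G`. -/
def FlowGraph.Dom (G : FlowGraph V) (v w : V) : Prop :=
  DomOn G.A G.s v w

/-- A rooted tree on vertex set `V`, given by a parent function: the root is a
fixed point of the parent function, and iterating the parent function from any
vertex eventually reaches the root. -/
structure ParentTree (V : Type*) where
  parent : V → V
  root : V
  parent_root : parent root = root
  reaches_root : ∀ v : V, ∃ n : ℕ, parent^[n] v = root

/-- `T.Anc x y`: `x` is an ancestor of `y` in the rooted tree `T` (every vertex
is an ancestor of itself). -/
def ParentTree.Anc (T : ParentTree V) (x y : V) : Prop :=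
  ∃ n : ℕ, T.parent^[n] y = x

/-- `T` has the parent property with respect to `G`: for every arc `(v, w)`,
the parent of `w` is an ancestor of `v` in `T`. -/
def ParentProperty (G : FlowGraph V) (T : ParentTree V) : Prop :=
  ∀ v w : V, G.A v w → T.Anc (T.parent w) v

/-- The sibling property with respect to an arbitrary arc relation `A` with
start vertex `s`: no non-root vertex dominates a distinct vertex with the same
parent. -/
def SiblingPropertyOn (A : V → V → Prop) (s : V) (T : ParentTree V) : Prop :=
  ∀ v w : V, v ≠ T.root → w ≠ T.root → v ≠ w → T.parent v = T.parent w →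
    ¬ DomOn A s v w

/-- `T` has the sibling property with respect to the flow graph `G`. -/
def SiblingProperty (G : FlowGraph V) (T : ParentTree V) : Prop :=
  SiblingPropertyOn G.A G.s T

/-- `T` is the dominator tree of the digraph with arc relation `A` and start
vertex `s`: `T` is rooted at `s`, and the parent of every vertex `v ≠ s` is its
immediate dominator, i.e. a strict dominator of `v` that is dominated by every
strict dominator of `v`. -/
def IsDomTreeOn (A : V → V → Prop) (s : V) (T : ParentTree V) : Prop :=
  T.root = s ∧ ∀ v : V, v ≠ s →
    DomOn A s (T.parent v) v ∧ T.parent v ≠ v ∧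
    ∀ u : V, DomOn A s u v → u ≠ v → DomOn A s u (T.parent v)

/-- `T` is the dominator tree of the flow graph `G`. -/
def IsDomTree (G : FlowGraph V) (T : ParentTree V) : Prop :=
  IsDomTreeOn G.A G.s T

/-- `ord` is (the numbering of) a preorder of the rooted tree `T`: an injective
numbering of the vertices such that for every vertex `v` the descendants of `v`
are ordered consecutively, with `v` first. -/
def IsTreePreorder (T : ParentTree V) (ord : V → ℕ) : Prop :=
  Function.Injective ord ∧
  (∀ v x : V, T.Anc v x → ord v ≤ ord x) ∧
  (∀ v x y z : V, T.Anc v x → T.Anc v z → ord x ≤ ord y → ord y ≤ ord z →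
    T.Anc v y)

/-- A preorder `ord` of `T` is low-high on the digraph with arc relation `A`
and start vertex `s`: for every `v ≠ s`, either `(t(v), v)` is an arc, or there
are arcs `(u, v)` and `(w, v)` with `u < v < w` in the order and `w` not a
descendant of `v` in `T`. -/
def LowHighOn (A : V → V → Prop) (s : V) (T : ParentTree V) (ord : V → ℕ) :
    Prop :=
  IsTreePreorder T ord ∧
  ∀ v : V, v ≠ s → (A (T.parent v) v ∨
    ∃ u w : V, A u v ∧ A w v ∧ ord u < ord v ∧ ord v < ord w ∧ ¬ T.Anc v w)

/-- A low-high order of `T` on the flow graph `G`. -/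
def LowHigh (G : FlowGraph V) (T : ParentTree V) (ord : V → ℕ) : Prop :=
  LowHighOn G.A G.s T ord

/-- `B` is (the arc relation of) a spanning tree of `G` rooted at `s`: a
subgraph of `G` in which no arc enters `s`, every vertex other than `s` has
exactly one entering arc, and every vertex is reachable from `s`. -/
def IsSpanningTree (G : FlowGraph V) (B : V → V → Prop) : Prop :=
  (∀ u v : V, B u v → G.A u v) ∧
  (∀ v : V, ¬ B v G.s) ∧
  (∀ v : V, v ≠ G.s → ∃! u : V, B u v) ∧
  (∀ v : V, ∃ p : List V, IsWalk B G.s v p)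

/-- Spanning trees `B` and `R` of `G` rooted at `s` are independent: for every
vertex `v`, the paths from `s` to `v` in `B` and in `R` have in common only
dominators of `v`. -/
def Independent (G : FlowGraph V) (B R : V → V → Prop) : Prop :=
  ∀ v : V, ∀ p q : List V, IsWalk B G.s v p → IsWalk R G.s v q →
    ∀ x : V, x ∈ p → x ∈ q → G.Dom x v

/-- Spanning trees `B` and `R` of `G` rooted at `s` are strongly independent:
for every pair of vertices `v`, `w`, either the path from `s` to `v` in `B` and
the path from `s` to `w` in `R` have in common only common dominators of `v`
and `w`, or the same holds with the roles of `B` and `R` exchanged. -/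
def StronglyIndependent (G : FlowGraph V) (B R : V → V → Prop) : Prop :=
  ∀ v w : V,
    (∀ p q : List V, IsWalk B G.s v p → IsWalk R G.s w q →
      ∀ x : V, x ∈ p → x ∈ q → G.Dom x v ∧ G.Dom x w) ∨
    (∀ p q : List V, IsWalk R G.s v p → IsWalk B G.s w q →
      ∀ x : V, x ∈ p → x ∈ q → G.Dom x v ∧ G.Dom x w)

/-- `IsDerivedArcOf G T v b a`: `(a, b)` is the derived arc of the arc `(v, b)`
of `G` with respect to `T`: `b` is not an ancestor of `v` in `T`, and `a = v`
if `v` is the parent of `b`, while otherwise `a` is the sibling of `b` in `T`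
that is an ancestor of `v`. -/
def IsDerivedArcOf (G : FlowGraph V) (T : ParentTree V) (v b a : V) : Prop :=
  G.A v b ∧ ¬ T.Anc b v ∧
    ((v = T.parent b ∧ a = v) ∨
     (v ≠ T.parent b ∧ a ≠ T.root ∧ T.parent a = T.parent b ∧ T.Anc a v))

/-- The arc relation of the derived graph of `G` with respect to `T`. -/
def DerivedArc (G : FlowGraph V) (T : ParentTree V) (a b : V) : Prop :=
  ∃ v : V, IsDerivedArcOf G T v b a

/-- `S` is the vertex set of a strongly connected subgraph of the digraph with
arc relation `A`. -/
def StronglyConnectedSet (A : V → V → Prop) (S : Set V) : Prop :=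
  S.Nonempty ∧ ∀ u ∈ S, ∀ v ∈ S, ∃ p : List V,
    IsWalk A u v p ∧ ∀ x ∈ p, x ∈ S

/-- `G` is reducible: every strongly connected subgraph has a single entry
vertex, i.e. a vertex of the subgraph contained in every path from `s` to a
vertex of the subgraph. -/
def Reducible (G : FlowGraph V) : Prop :=
  ∀ S : Set V, StronglyConnectedSet G.A S →
    ∃ v ∈ S, ∀ u ∈ S, ∀ p : List V, IsWalk G.A G.s u p → v ∈ p

/-- A digraph is acyclic if it has no cycle (a path from a vertex to itself
with at least one arc). -/
def Acyclic (A : V → V → Prop) : Prop :=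
  ¬ ∃ (v : V) (p : List V), IsWalk A v v p ∧ 2 ≤ p.length

/-- `IsHighWalk A ν u v p`: `p` is a high path from `u` to `v`: a path all of
whose vertices other than `u` and `v` are greater (in the numbering `ν`) than
both `u` and `v`. -/
def IsHighWalk (A : V → V → Prop) (ν : V → ℕ) (u v : V) (p : List V) : Prop :=
  IsWalk A u v p ∧ ∀ x ∈ p, x ≠ u → x ≠ v → ν u < ν x ∧ ν v < ν x

/-!
Reversing the order in which a preorder visits the children of each vertex gives a second,
mirrored preorder, and `x` is an ancestor of `w` exactly when `x` is not after `w` in either of the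
two. The arcs of `B` increase in the given preorder, those of `R` in the mirrored one, so both
graphs are acyclic and hence, on finitely many vertices, spanning trees. If `v ≤ w` and `x` is
common to the path to `v` in `B` and the path to `w` in `R`, then `x ≤ v ≤ w` in the preorder and
`x` is not after `w` in the mirrored one. So `x` is an ancestor of `w`, and also of `v`, because
descendants are consecutive. By the parent property, ancestors are dominators.
-/

theorem IsWalk.backward_induction {A : V → V → Prop} {u v : V} {p : List V} {P : V → Prop}
    (hp : IsWalk A u v p) (step : ∀ a c, c ∈ p → A a c → P c → P a) (last : P v) :
    ∀ x ∈ p, P x := by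
  obtain ⟨hchain, -, hlast⟩ := hp
  refine (List.IsChain.iff_mem.1 hchain).backwards_induction P p
    (fun a c hac => step a c hac.2.1 hac.2.2) fun hne => ?_
  rwa [List.getLast_of_getLast?_eq_some hlast]

theorem IsWalk.eq_or_rel_of_mem {A L : V → V → Prop} [IsTrans V L] (hAL : ∀ a c, A a c → L a c)
    {u v x : V} {p : List V} (hp : IsWalk A u v p) (hx : x ∈ p) : x = v ∨ L x v := by
  refine hp.backward_induction (P := fun y => y = v ∨ L y v) ?_ (Or.inl rfl) x hx
  rintro a c - hac (rfl | hcv)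
  · exact Or.inr (hAL a c hac)
  · exact Or.inr (_root_.trans (hAL a c hac) hcv)

theorem exists_isWalk_of_reflTransGen {A : V → V → Prop} {u v : V}
    (h : Relation.ReflTransGen A u v) : ∃ p : List V, IsWalk A u v p := by
  obtain ⟨l, hchain, hlast⟩ := List.exists_isChain_cons_of_relationReflTransGen h
  exact ⟨u :: l, hchain, rfl, by rw [List.getLast?_eq_some_getLast (List.cons_ne_nil u l), hlast]⟩

/-- The digraph with arc set `{(f v, v) | v ≠ s}`, in which `f` chooses the only arc entering each
vertex other than `s`; both `B` and `R` have this form. -/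
def ChosenArc (s : V) (f : V → V) (a c : V) : Prop :=
  c ≠ s ∧ f c = a

theorem reflTransGen_chosenArc {L : V → V → Prop} (wf : WellFounded L) {s : V} {f : V → V}
    (hL : ∀ v, v ≠ s → L (f v) v) (v : V) : Relation.ReflTransGen (ChosenArc s f) s v := by
  induction v using wf.induction with
  | h v ih =>
    by_cases hv : v = s
    · rw [hv]
    · exact (ih (f v) (hL v hv)).tail ⟨hv, rfl⟩

theorem isSpanningTree_chosenArc {L : V → V → Prop} (wf : WellFounded L) {G : FlowGraph V}
    {f : V → V} (hA : ∀ v, v ≠ G.s → G.A (f v) v) (hL : ∀ v, v ≠ G.s → L (f v) v) :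
    IsSpanningTree G (ChosenArc G.s f) := by
  refine ⟨?subgraph, ?no_enter, ?unique, ?reach⟩
  case subgraph =>
    rintro _ v ⟨hv, rfl⟩
    exact hA v hv
  case no_enter => exact fun _ h => h.1 rfl
  case unique => exact fun v hv => ⟨f v, ⟨hv, rfl⟩, fun _ h => h.2.symm⟩
  case reach => exact fun v => exists_isWalk_of_reflTransGen (reflTransGen_chosenArc wf hL v)

namespace ParentTree

variable {T : ParentTree V} {a b c v : V}

theorem Anc.refl (T : ParentTree V) (a : V) : T.Anc a a :=
  ⟨0, rfl⟩

theorem anc_parent (T : ParentTree V) (v : V) : T.Anc (T.parent v) v :=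
  ⟨1, rfl⟩

theorem Anc.trans (hab : T.Anc a b) (hbc : T.Anc b c) : T.Anc a c := by
  obtain ⟨m, rfl⟩ := hab
  obtain ⟨n, rfl⟩ := hbc
  exact ⟨m + n, Function.iterate_add_apply _ _ _ _⟩

theorem Anc.eq_root (h : T.Anc a T.root) : a = T.root := by
  obtain ⟨n, rfl⟩ := h
  exact Function.iterate_fixed T.parent_root n

theorem Anc.anc_parent_of_ne (h : T.Anc a v) (hne : a ≠ v) : T.Anc a (T.parent v) := by
  obtain ⟨_ | n, hn⟩ := h
  · exact absurd hn.symm hne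
  · exact ⟨n, hn⟩

theorem parent_ne (h : v ≠ T.root) : T.parent v ≠ v := by
  intro hfix
  obtain ⟨n, hn⟩ := T.reaches_root v
  exact h ((Function.iterate_fixed hfix n).symm.trans hn)

end ParentTree

theorem ParentProperty.dom_of_anc {G : FlowGraph V} {T : ParentTree V} (hpp : ParentProperty G T)
    (hroot : T.root = G.s) {x v : V} (hxv : T.Anc x v) : G.Dom x v := by
  intro p hp
  by_contra hxp
  have start_mem : G.s ∈ p := List.mem_of_head? hp.2.1
  have anc_start : T.Anc x G.s := by
    refine hp.backward_induction (fun a c hc hac hxc => ?_) hxv G.s start_mem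
    have hne : x ≠ c := fun h => hxp (h ▸ hc)
    exact (hxc.anc_parent_of_ne hne).trans (hpp a c hac)
  have hxs : x = G.s := by
    rw [← hroot] at anc_start ⊢
    exact anc_start.eq_root
  exact hxp (hxs ▸ start_mem)

/-- `a` strictly precedes `b` in the mirror image of the preorder `ord` of `T`, the preorder which
visits the children of every vertex in the opposite order: `a` is a proper ancestor of `b`, or `a`
and `b` are unrelated in `T` and `b` precedes `a` in `ord`. When `ord b < ord a`, being unrelated
just means that `b` is not an ancestor of `a`. -/
def MirrorLT (T : ParentTree V) (ord : V → ℕ) (a b : V) : Prop :=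
  (T.Anc a b ∧ a ≠ b) ∨ (ord b < ord a ∧ ¬ T.Anc b a)

theorem mirrorLT_parent {T : ParentTree V} (ord : V → ℕ) {v : V} (hv : v ≠ T.root) :
    MirrorLT T ord (T.parent v) v :=
  Or.inl ⟨T.anc_parent v, ParentTree.parent_ne hv⟩

theorem MirrorLT.anc_of_ord_le {T : ParentTree V} {ord : V → ℕ} {a b : V}
    (h : MirrorLT T ord a b) (hab : ord a ≤ ord b) : T.Anc a b :=
  h.elim And.left fun hba => absurd hab hba.1.not_ge

namespace IsTreePreorder

variable {T : ParentTree V} {ord : V → ℕ}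

theorem anc_antisymm (h : IsTreePreorder T ord) {a b : V} (hab : T.Anc a b) (hba : T.Anc b a) :
    a = b :=
  h.1 (le_antisymm (h.2.1 a b hab) (h.2.1 b a hba))

theorem anc_of_between (h : IsTreePreorder T ord) {a b c : V} (hac : T.Anc a c)
    (hab : ord a ≤ ord b) (hbc : ord b ≤ ord c) : T.Anc a b :=
  h.2.2 a a b c (.refl T a) hac hab hbc

theorem mirrorLT_trans (h : IsTreePreorder T ord) {a b c : V} (hab : MirrorLT T ord a b)
    (hbc : MirrorLT T ord b c) : MirrorLT T ord a c := by
  rcases hab with ⟨anc_ab, ne_ab⟩ | ⟨lt_ba, not_anc_ba⟩ <;>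
    rcases hbc with ⟨anc_bc, -⟩ | ⟨lt_cb, not_anc_cb⟩
  · refine Or.inl ⟨anc_ab.trans anc_bc, ?_⟩
    rintro rfl
    exact ne_ab (h.anc_antisymm anc_ab anc_bc)
  · rcases le_or_gt (ord a) (ord c) with le_ac | lt_ca
    · refine Or.inl ⟨h.anc_of_between anc_ab le_ac lt_cb.le, ?_⟩
      rintro rfl
      exact not_anc_cb anc_ab
    · exact Or.inr ⟨lt_ca, fun anc_ca => not_anc_cb (anc_ca.trans anc_ab)⟩
  · refine Or.inr ⟨?_, fun anc_ca => not_anc_ba (anc_bc.trans anc_ca)⟩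
    by_contra! le_ac
    exact not_anc_ba (h.anc_of_between anc_bc lt_ba.le le_ac)
  · exact Or.inr ⟨lt_cb.trans lt_ba,
      fun anc_ca => not_anc_cb (h.anc_of_between anc_ca lt_cb.le lt_ba.le)⟩

theorem isStrictOrder_mirrorLT (h : IsTreePreorder T ord) : IsStrictOrder V (MirrorLT T ord) where
  irrefl _ := by
    rintro (⟨-, hne⟩ | ⟨hlt, -⟩)
    · exact hne rfl
    · exact hlt.false
  trans _ _ _ := h.mirrorLT_trans

theorem wellFounded_mirrorLT [Finite V] (h : IsTreePreorder T ord) :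
    WellFounded (MirrorLT T ord) :=
  have := h.isStrictOrder_mirrorLT
  Finite.wellFounded_of_trans_of_irrefl _

section Walks

variable {B R : V → V → Prop}

theorem anc_and_anc_of_mem_walks (h : IsTreePreorder T ord) (hB : ∀ a c, B a c → ord a ≤ ord c)
    (hR : ∀ a c, R a c → MirrorLT T ord a c) {s s' v w x : V} {p q : List V}
    (hvw : ord v ≤ ord w) (hp : IsWalk B s v p) (hq : IsWalk R s' w q) (hxp : x ∈ p)
    (hxq : x ∈ q) : T.Anc x v ∧ T.Anc x w := by
  have := h.isStrictOrder_mirrorLT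
  have ord_le : ord x ≤ ord v :=
    hp.backward_induction (fun a c _ hac hcv => (hB a c hac).trans hcv) le_rfl x hxp
  have anc_w : T.Anc x w := by
    rcases hq.eq_or_rel_of_mem hR hxq with rfl | hlt
    · exact .refl T x
    · exact hlt.anc_of_ord_le (ord_le.trans hvw)
  exact ⟨h.anc_of_between anc_w ord_le hvw, anc_w⟩

theorem stronglyIndependent (h : IsTreePreorder T ord) {G : FlowGraph V} (hroot : T.root = G.s)
    (hpp : ParentProperty G T) (hB : ∀ a c, B a c → ord a ≤ ord c)
    (hR : ∀ a c, R a c → MirrorLT T ord a c) : StronglyIndependent G B R := by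
  have common_dom {v w : V} (hvw : ord v ≤ ord w) {p q : List V} (hp : IsWalk B G.s v p)
      (hq : IsWalk R G.s w q) {x : V} (hxp : x ∈ p) (hxq : x ∈ q) : G.Dom x v ∧ G.Dom x w :=
    (h.anc_and_anc_of_mem_walks hB hR hvw hp hq hxp hxq).imp
      (hpp.dom_of_anc hroot) (hpp.dom_of_anc hroot)
  intro v w
  rcases le_total (ord v) (ord w) with hvw | hwv
  · exact Or.inl fun p q hp hq x hxp hxq => common_dom hvw hp hq hxp hxq
  · exact Or.inr fun p q hp hq x hxp hxq => (common_dom hwv hq hp hxq hxp).symm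

end Walks

end IsTreePreorder

/-- Given a tree `T` with the parent property and a low-high order, and
functions `b`, `r` choosing for each `v ≠ s` arcs `(b(v), v)` and `(r(v), v)`
of `G` with `b(v) < v`, and with `r(v) = t(v)` or `r(v) > v` not a descendant
of `v`, the graphs `B` and `R` with arc sets `{(b(v), v)}` and `{(r(v), v)}`
are strongly independent spanning trees of `G` rooted at `s`. -/
theorem stmt6 [Fintype V] (G : FlowGraph V) (T : ParentTree V)
    (hroot : T.root = G.s) (hpp : ParentProperty G T)
    (ord : V → ℕ) (hlh : LowHigh G T ord)
    (b r : V → V)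
    (hb : ∀ v : V, v ≠ G.s → G.A (b v) v ∧ ord (b v) < ord v)
    (hr : ∀ v : V, v ≠ G.s → G.A (r v) v ∧
      (r v = T.parent v ∨ (ord v < ord (r v) ∧ ¬ T.Anc v (r v)))) :
    IsSpanningTree G (fun a c => c ≠ G.s ∧ b c = a) ∧
    IsSpanningTree G (fun a c => c ≠ G.s ∧ r c = a) ∧
    StronglyIndependent G (fun a c => c ≠ G.s ∧ b c = a)
      (fun a c => c ≠ G.s ∧ r c = a) := by
  have hord : IsTreePreorder T ord := hlh.1
  have b_lt (v : V) (hv : v ≠ G.s) : ord (b v) < ord v := (hb v hv).2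
  have r_mirrorLT (v : V) (hv : v ≠ G.s) : MirrorLT T ord (r v) v := by
    rcases (hr v hv).2 with h_parent | h_high
    · rw [h_parent]
      exact mirrorLT_parent ord (hroot ▸ hv)
    · exact Or.inr h_high
  refine ⟨?_, ?_, ?_⟩
  · exact isSpanningTree_chosenArc (measure ord).wf (fun v hv => (hb v hv).1) b_lt
  · exact isSpanningTree_chosenArc hord.wellFounded_mirrorLT (fun v hv => (hr v hv).1) r_mirrorLT
  · refine hord.stronglyIndependent hroot hpp ?_ ?_
    · rintro _ v ⟨hv, rfl⟩
      exact (b_lt v hv).le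
    · rintro _ v ⟨hv, rfl⟩
      exact r_mirrorLT v hv
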